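/- Let k be a totally real number field in which the rational prime 3 is unramified (equivalently, 3 does not divide the discriminant of k), and let K = k(ω) be the totally imaginary quadratic extension of k obtained by adjoining a primitive cube root of unity ω. Then every unit ε of the ring of integers R_K satisfies N_{K/k}(ε) = η² for some unit η of the ring of integers R_k; in other words, the index |R_K^* : R_K^{*(2)}| = 1, where R_K^{*(2)} = { x ∈ R_K^* : N_{K/k}(x) ∈ (R_k^*)² }. -/

import Mathlib

open NumberField

/-!
`K/k` is a CM-extension, so the roots of unity and the real units generate a subgroup of index
`1` or `2` in `(𝓞 K)ˣ`. If the index is `1`, every unit is `ε = v * ξ` with `v` a unit of `k` and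
`ξ` a root of unity, and `N(ε) = ε * conj ε = v ^ 2`.

If the index is `2`, some quotient `u / conj u` generates the roots of unity, so `-1` is a power of
it. At a prime of `K` that is ramified over `k`, conjugation is trivial on residues, so `u / conj u`
and hence `-1` reduce to `1`: the prime divides `2`. But `K = k(√-3)` is ramified above every prime
of `k` at which the valuation of `3` is odd, and over an unramified `3` these valuations are `1`.
-/

section Dedekind

theorem mem_of_sq_eq_mul_of_odd_multiplicity {R : Type*} [CommRing R] [IsDedekindDomain R]
    {P : Ideal R} [hP : P.IsPrime] {a c y : R} (ha : a ≠ 0)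
    (hodd : Odd (multiplicity P (Ideal.span {a}))) (h : y ^ 2 = a * c) : c ∈ P := by
  by_contra hc
  have hc0 : c ≠ 0 := fun h0 ↦ hc (h0 ▸ P.zero_mem)
  have hac : a * c ≠ 0 := mul_ne_zero ha hc0
  have hy0 : y ≠ 0 := by
    rintro rfl
    exact hac (by simpa using h.symm)
  have hP0 : P ≠ ⊥ := by
    rintro rfl
    rw [← Ideal.zero_eq_bot, multiplicity_zero_eq_zero_of_ne_zero _ (by simpa using ha)] at hodd
    exact Nat.not_odd_zero hodd
  have hprime : Prime P := Ideal.prime_of_isPrime hP0 hP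
  have hfin {x : R} (hx : x ≠ 0) : FiniteMultiplicity P (Ideal.span {x}) :=
    .of_prime_left hprime (by simpa using hx)
  have hmulc : multiplicity P (Ideal.span {c}) = 0 :=
    multiplicity_eq_zero.mpr (by simpa [Ideal.dvd_span_singleton] using hc)
  have hmul : multiplicity P (Ideal.span {a}) = 2 * multiplicity P (Ideal.span {y}) := by
    calc multiplicity P (Ideal.span {a})
        = multiplicity P (Ideal.span {a} * Ideal.span {c}) := by
          rw [multiplicity_mul hprime
            (Ideal.span_singleton_mul_span_singleton a c ▸ hfin hac), hmulc, add_zero]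
      _ = multiplicity P (Ideal.span {y} ^ 2) := by
          rw [Ideal.span_singleton_mul_span_singleton, Ideal.span_singleton_pow, h]
      _ = 2 * multiplicity P (Ideal.span {y}) := (hfin hy0).multiplicity_pow hprime
  exact Nat.not_odd_iff_even.mpr (hmul ▸ even_two_mul _) hodd

theorem sub_mem_of_sq_eq_of_odd_multiplicity {A B : Type*} [CommRing A] [IsDedekindDomain A]
    [CommRing B] [Algebra A B] [FaithfulSMul A B] {σ : B →+* B}
    (hσ : Function.Involutive σ) (hfix : ∀ b, σ b = b → b ∈ Set.range (algebraMap A B))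
    {s : B} {a : A} (hs : σ s = -s) (hsa : s ^ 2 = algebraMap A B a) (ha : a ≠ 0)
    {P : Ideal A} [P.IsPrime] (hodd : Odd (multiplicity P (Ideal.span {a})))
    (Q : Ideal B) [hQ : Q.IsPrime] [Q.LiesOver P] (x : B) : x - σ x ∈ Q := by
  set d := x - σ x
  have hd : σ d = -d := by simp [d, hσ x]
  obtain ⟨y, hy⟩ := hfix (d * s) (by simp [hd, hs])
  obtain ⟨c, hc⟩ := hfix (d ^ 2) (by simp [hd])
  have hyc : y ^ 2 = a * c := by
    apply FaithfulSMul.algebraMap_injective A B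
    rw [map_pow, map_mul, hy, hc, ← hsa, mul_pow, mul_comm]
  have hcP : c ∈ P := mem_of_sq_eq_mul_of_odd_multiplicity ha hodd hyc
  exact hQ.mem_of_pow_mem 2 (hc ▸ (Ideal.mem_of_liesOver Q P c).mp hcP)

end Dedekind

section RationalPrime

variable {k : Type*} [Field k] [NumberField k] {p : ℤ}

theorem multiplicity_span_intCast_eq_ramificationIdx (hp : p ≠ 0) (P : Ideal (𝓞 k))
    [hP : P.IsPrime] [P.LiesOver (Ideal.span {p})] :
    multiplicity P (Ideal.span {(p : 𝓞 k)}) = P.ramificationIdx ℤ := by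
  have hmap : (Ideal.span {p}).map (algebraMap ℤ (𝓞 k)) = Ideal.span {(p : 𝓞 k)} := by
    rw [Ideal.map_span, Set.image_singleton, eq_intCast]
  rw [← Ideal.ramificationIdx'_eq_ramificationIdx (Ideal.span {p}) P (by simpa using hp), ← hmap,
    Ideal.IsDedekindDomain.ramificationIdx'_eq_multiplicity (by rw [hmap]; simpa using hp) hP]

theorem exists_liesOver_ramificationIdx_eq_one_of_not_dvd_discr (hp : Prime p)
    (h : ¬ p ∣ discr k) :
    ∃ P : Ideal (𝓞 k), P.IsPrime ∧ P.LiesOver (Ideal.span {p}) ∧ P.ramificationIdx ℤ = 1 := by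
  have : (Ideal.span {p}).IsPrime := (Ideal.span_singleton_prime hp.ne_zero).mpr hp
  obtain ⟨P, hP, hPp⟩ := (Ideal.span {p}).nonempty_primesOver (S := 𝓞 k)
  exact ⟨P, hP, hPp,
    ((not_dvd_discr_iff_isUnramifiedIn k (𝓞 k) hp).mp h).ramificationIdx_eq_one hPp⟩

end RationalPrime

section CMField

open IsCMField NumberField.Units

variable {K : Type*} [Field K] [NumberField K] [IsCMField K]

theorem complexConj_eq_inv_of_pow_eq_one {x : K} {n : ℕ} (hn : n ≠ 0) (hx : x ^ n = 1) :
    complexConj K x = x⁻¹ := by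
  let φ : K →+* ℂ := Classical.choice inferInstance
  have hφ : ‖φ x‖ = 1 := Complex.norm_eq_one_of_pow_eq_one (by rw [← map_pow, hx, map_one]) hn
  exact φ.injective (by rw [complexEmbedding_complexConj, map_inv₀, Complex.inv_eq_conj hφ])

theorem algebraMap_norm_maximalRealSubfield (x : K) :
    algebraMap (maximalRealSubfield K) K (Algebra.norm (maximalRealSubfield K) x) =
      x * complexConj K x := by
  classical
  have huniv : (Finset.univ : Finset Gal(K/maximalRealSubfield K)) = {1, complexConj K} := by
    refine (Finset.eq_univ_of_card _ ?_).symm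
    rw [Finset.card_pair (complexConj_ne_one K).symm, ← Nat.card_eq_fintype_card,
      IsGalois.card_aut_eq_finrank, Algebra.IsQuadraticExtension.finrank_eq_two]
  rw [Algebra.norm_eq_prod_automorphisms, huniv, Finset.prod_pair (complexConj_ne_one K).symm,
    AlgEquiv.one_apply]

theorem indexRealUnits_eq_one_of_forall_sub_complexConj_mem {Q : Ideal (𝓞 K)} (h2 : 2 ∉ Q)
    (hQ : ∀ x, x - ringOfIntegersComplexConj K x ∈ Q) : indexRealUnits K = 1 := by
  refine (indexRealUnits_eq_one_or_two K).resolve_right fun hindex ↦ ?_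
  obtain ⟨u, hu⟩ := (indexRealUnits_eq_two_iff K).mp hindex
  let π := Units.map (Ideal.Quotient.mk Q : 𝓞 K →* 𝓞 K ⧸ Q)
  have hπ : π (unitsMulComplexConjInv K u) = 1 := by
    rw [unitsMulComplexConjInv_apply, map_mul, map_inv, mul_inv_eq_one]
    exact Units.ext (Ideal.Quotient.eq.mpr (hQ u))
  obtain ⟨m, hm⟩ : (⟨-1, neg_one_mem_torsion⟩ : torsion K) ∈
      Subgroup.zpowers (unitsMulComplexConjInv K u) := hu ▸ Subgroup.mem_top _
  have hneg : π (-1) = 1 := by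
    rw [show (-1 : (𝓞 K)ˣ) = unitsMulComplexConjInv K u ^ m from congr(($hm).val).symm, map_zpow,
      hπ, one_zpow]
  have hmem : (-1 : 𝓞 K) - 1 ∈ Q := Ideal.Quotient.eq.mp congr(($hneg).val)
  rw [← neg_add', neg_mem_iff, one_add_one_eq_two] at hmem
  exact h2 hmem

theorem mul_unitsComplexConj_of_mem_realUnits_of_mem_torsion {v ξ : (𝓞 K)ˣ}
    (hv : v ∈ realUnits K) (hξ : ξ ∈ torsion K) :
    v * ξ * unitsComplexConj K (v * ξ) = v ^ 2 := by
  have hconjξ : unitsComplexConj K ξ = ξ⁻¹ := unitsComplexConj_torsion K ⟨ξ, hξ⟩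
  rw [map_mul, (unitsComplexConj_eq_self_iff K v).mpr hv, hconjξ, mul_mul_mul_comm,
    mul_inv_cancel, mul_one, sq]

end CMField

section CMExtension

open IsCMField NumberField.Units

variable {k K : Type*} [Field k] [IsTotallyReal k] [Field K] [NumberField K]
  [IsTotallyComplex K] [Algebra k K] [Algebra.IsQuadraticExtension k K] [IsCMField K]

theorem complexConj_eq_self_iff_mem_range_algebraMap (x : K) :
    complexConj K x = x ↔ x ∈ Set.range (algebraMap k K) := by
  let e := CMExtension.equivMaximalRealSubfield k K
  rw [complexConj_eq_self_iff]
  constructor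
  · exact fun hx ↦ ⟨e.symm ⟨x, hx⟩,
      CMExtension.algebraMap_equivMaximalRealSubfield_symm_apply k K ⟨x, hx⟩⟩
  · rintro ⟨y, rfl⟩
    exact (e y).2

theorem ringOfIntegersComplexConj_eq_self_iff_mem_range_algebraMap (x : 𝓞 K) :
    ringOfIntegersComplexConj K x = x ↔ x ∈ Set.range (algebraMap (𝓞 k) (𝓞 K)) := by
  rw [RingOfIntegers.ext_iff, coe_ringOfIntegersComplexConj,
    complexConj_eq_self_iff_mem_range_algebraMap (k := k)]
  constructor
  · rintro ⟨y, hy⟩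
    have hyint : IsIntegral ℤ y := by
      rw [← isIntegral_algebraMap_iff (algebraMap k K).injective, hy]
      exact x.isIntegral_coe
    exact ⟨⟨y, hyint⟩, RingOfIntegers.ext hy⟩
  · rintro ⟨y, rfl⟩
    exact ⟨y, rfl⟩

theorem mem_realUnits_iff_exists_algebraMap_eq (v : (𝓞 K)ˣ) :
    v ∈ realUnits K ↔ ∃ η : (𝓞 k)ˣ, algebraMap (𝓞 k) (𝓞 K) η = v := by
  rw [← unitsComplexConj_eq_self_iff, Units.ext_iff]
  refine (ringOfIntegersComplexConj_eq_self_iff_mem_range_algebraMap (k := k) (v : 𝓞 K)).trans ?_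
  constructor
  · rintro ⟨y, hy⟩
    have hunit : IsUnit y := .of_map (algebraMap (𝓞 k) (𝓞 K)) y (hy ▸ v.isUnit)
    exact ⟨hunit.unit, hy⟩
  · rintro ⟨η, hη⟩
    exact ⟨η, hη⟩

theorem algebraMap_norm_eq_mul_complexConj (x : K) :
    algebraMap k K (Algebra.norm k x) = x * complexConj K x := by
  rw [Algebra.norm_eq_of_equiv_equiv (CMExtension.equivMaximalRealSubfield k K)
      (RingEquiv.refl K) (by ext; rfl) x,
    CMExtension.algebraMap_equivMaximalRealSubfield_symm_apply]
  exact algebraMap_norm_maximalRealSubfield x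

theorem exists_norm_eq_sq_of_indexRealUnits_eq_one (h : indexRealUnits K = 1) (ε : (𝓞 K)ˣ) :
    ∃ η : (𝓞 k)ˣ, RingOfIntegers.norm k (ε : 𝓞 K) = (η : 𝓞 k) ^ 2 := by
  obtain ⟨v, hv, ξ, hξ, rfl⟩ : ∃ v ∈ realUnits K, ∃ ξ ∈ torsion K, v * ξ = ε :=
    Subgroup.mem_sup.mp (Subgroup.index_eq_one.mp h ▸ Subgroup.mem_top ε)
  obtain ⟨η, hη⟩ := (mem_realUnits_iff_exists_algebraMap_eq (k := k) v).mp hv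
  refine ⟨η, RingOfIntegers.ext ((algebraMap k K).injective ?_)⟩
  have hηv : algebraMap (𝓞 k) (𝓞 K) (η ^ 2) = (v ^ 2 : (𝓞 K)ˣ) := by
    rw [map_pow, hη, Units.val_pow_eq_pow_val]
  have hnorm := mul_unitsComplexConj_of_mem_realUnits_of_mem_torsion hv hξ
  rw [RingOfIntegers.coe_norm, algebraMap_norm_eq_mul_complexConj]
  exact congr(($hnorm).val.val).trans congr(($hηv).val).symm

end CMExtension

section CubeRootOfUnity

open IsCMField

variable {K : Type*} [Field K] {ω : K}

theorem isPrimitiveRoot_three_of_sq_add_self_add_one_eq_zero [NeZero (3 : K)]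
    (hω : ω ^ 2 + ω + 1 = 0) : IsPrimitiveRoot ω 3 := by
  have : NeZero ((3 : ℕ) : K) := ⟨by simpa using NeZero.ne (3 : K)⟩
  rw [← Polynomial.isRoot_cyclotomic_iff]
  simpa [Polynomial.cyclotomic_three] using hω

theorem isTotallyComplex_of_sq_add_self_add_one_eq_zero [NumberField K]
    (hω : ω ^ 2 + ω + 1 = 0) : IsTotallyComplex K :=
  nrRealPlaces_eq_zero_iff.mp <|
    InfinitePlace.IsPrimitiveRoot.nrRealPlaces_eq_zero_of_two_lt (by norm_num)
      (isPrimitiveRoot_three_of_sq_add_self_add_one_eq_zero hω)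

theorem complexConj_one_add_two_mul [NumberField K] [IsCMField K] (hω : ω ^ 2 + ω + 1 = 0) :
    complexConj K (1 + 2 * ω) = -(1 + 2 * ω) := by
  have hω3 : ω ^ 3 = 1 := (isPrimitiveRoot_three_of_sq_add_self_add_one_eq_zero hω).pow_eq_one
  have hconj : complexConj K ω = ω ^ 2 := by
    rw [complexConj_eq_inv_of_pow_eq_one three_ne_zero hω3]
    exact inv_eq_of_mul_eq_one_right (by rw [← hω3]; ring)
  rw [map_add, map_mul, map_one, map_ofNat, hconj]
  linear_combination 2 * hω

variable {k : Type*} [Field k] [NumberField k] [IsTotallyReal k] [NumberField K] [Algebra k K]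
  [Algebra.IsQuadraticExtension k K]

theorem sub_complexConj_mem_of_odd_ramificationIdx [IsTotallyComplex K] [IsCMField K]
    (hω : ω ^ 2 + ω + 1 = 0) (P : Ideal (𝓞 k)) [P.IsPrime] [P.LiesOver (Ideal.span {(3 : ℤ)})]
    (hP : Odd (P.ramificationIdx ℤ)) (Q : Ideal (𝓞 K)) [Q.IsPrime] [Q.LiesOver P] (x : 𝓞 K) :
    x - ringOfIntegersComplexConj K x ∈ Q := by
  let ω' : 𝓞 K := (isPrimitiveRoot_three_of_sq_add_self_add_one_eq_zero hω).toInteger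
  have hconj : ringOfIntegersComplexConj K (1 + 2 * ω') = -(1 + 2 * ω') :=
    RingOfIntegers.ext (complexConj_one_add_two_mul hω)
  have hsq : (1 + 2 * ω') ^ 2 = algebraMap (𝓞 k) (𝓞 K) (-3) := by
    have hω' : ω' ^ 2 + ω' + 1 = 0 := RingOfIntegers.ext hω
    rw [map_neg, map_ofNat]
    linear_combination 4 * hω'
  refine sub_mem_of_sq_eq_of_odd_multiplicity (σ := (ringOfIntegersComplexConj K : 𝓞 K →+* 𝓞 K))
    (fun y ↦ RingOfIntegers.ext (complexConj_apply_apply K y))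
    (fun y ↦ (ringOfIntegersComplexConj_eq_self_iff_mem_range_algebraMap y).mp)
    hconj hsq (by norm_num) (P := P) ?_ Q x
  have hmult := multiplicity_span_intCast_eq_ramificationIdx (three_ne_zero : (3 : ℤ) ≠ 0) P
  rw [Int.cast_ofNat] at hmult
  rwa [Ideal.span_singleton_neg, hmult]

theorem units_norm_sq_adjoin_omega_general (hω : ω ^ 2 + ω + 1 = 0) (P : Ideal (𝓞 k)) [P.IsPrime]
    [P.LiesOver (Ideal.span {(3 : ℤ)})] (hP : Odd (P.ramificationIdx ℤ)) (ε : (𝓞 K)ˣ) :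
    ∃ η : (𝓞 k)ˣ, RingOfIntegers.norm k (ε : 𝓞 K) = (η : 𝓞 k) ^ 2 := by
  have := isTotallyComplex_of_sq_add_self_add_one_eq_zero hω
  have := ofCMExtension k K
  obtain ⟨Q, hQ, _⟩ := P.nonempty_primesOver (S := 𝓞 K)
  have hQ3 : (3 : 𝓞 K) ∈ Q := by
    have : Q.LiesOver (Ideal.span {(3 : ℤ)}) := .trans Q P _
    simpa using (Ideal.mem_of_liesOver Q (Ideal.span {(3 : ℤ)}) 3).mp
      (Ideal.mem_span_singleton_self 3)
  have hQ2 : (2 : 𝓞 K) ∉ Q := fun h2 ↦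
    hQ.ne_top <| Q.eq_top_iff_one.mpr <| by simpa [← two_add_one_eq_three] using Q.sub_mem hQ3 h2
  have hindex : indexRealUnits K = 1 :=
    indexRealUnits_eq_one_of_forall_sub_complexConj_mem hQ2
      (sub_complexConj_mem_of_odd_ramificationIdx hω P hP Q)
  exact exists_norm_eq_sq_of_indexRealUnits_eq_one hindex ε

end CubeRootOfUnity

theorem isTotallyReal_of_forall_im_eq_zero {k : Type*} [Field k]
    (h : ∀ φ : k →+* ℂ, ∀ x : k, (φ x).im = 0) : IsTotallyReal k where
  isReal v := InfinitePlace.isReal_iff.mpr <|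
    RingHom.ext fun x ↦ Complex.conj_eq_iff_im.mpr (h v.embedding x)

/-- Let `k` be a totally real number field in which 3 is unramified (3 does not divide the
discriminant of `k`), and let `K = k(ω)` be the quadratic extension obtained by adjoining a
primitive cube root of unity `ω`.  Then every unit `ε` of `𝓞 K` satisfies `N_{K/k}(ε) = η ^ 2`
for some unit `η` of `𝓞 k`. -/
theorem units_norm_sq_adjoin_omega
    (k K : Type*) [Field k] [NumberField k] [Field K] [NumberField K] [Algebra k K]
    (htr : ∀ φ : k →+* ℂ, ∀ x : k, (φ x).im = 0)
    (h3 : ¬ ((3 : ℤ) ∣ NumberField.discr k))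
    (ω : K) (hω : ω ^ 2 + ω + 1 = 0)
    (hgen : Algebra.adjoin k ({ω} : Set K) = ⊤)
    (hdeg : Module.finrank k K = 2) :
    ∀ ε : (𝓞 K)ˣ, ∃ η : (𝓞 k)ˣ,
      RingOfIntegers.norm k (ε : 𝓞 K) = (η : 𝓞 k) ^ 2 := by
  have := isTotallyReal_of_forall_im_eq_zero htr
  have : Algebra.IsQuadraticExtension k K := ⟨hdeg⟩
  obtain ⟨P, _, _, hP⟩ := exists_liesOver_ramificationIdx_eq_one_of_not_dvd_discr Int.prime_three h3
  exact units_norm_sq_adjoin_omega_general hω P (hP ▸ odd_one)
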